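/- arXiv:1405.0781 — 2 statements merged into one kernel-verified Lean document; each statement's English description precedes it below -/
import Mathlib

section
/- For any finite words σ and τ over {1,…,m} with |p_σ − p_τ| ≤ T−1, the translation part of S_τ⁻¹∘S_σ, namely c = λ^{−p_τ}(b_σ − b_τ) (so that S_τ⁻¹∘S_σ(x) = λ^{p_σ−p_τ}x + c), satisfies c = λ^{T−2}·R(λ⁻¹) for some polynomial R all of whose coefficients lie in B−B. -/
open Polynomial Filter

noncomputable section

namespace PVOSC

variable {m : ℕ}

/-- `λ⁻¹` is a Pisot (P.V.) number: an algebraic integer `> 1` all of whose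
Galois conjugates other than itself have complex absolute value `< 1`. -/
def IsPisot (θ : ℝ) : Prop :=
  1 < θ ∧ IsIntegral ℤ θ ∧
    ∀ z : ℂ, aeval z (minpoly ℤ θ) = 0 → z ≠ (θ : ℂ) → ‖z‖ < 1

/-- `p_σ` for a finite word `σ`. -/
def wordP (p : Fin m → ℕ) (σ : List (Fin m)) : ℕ := (σ.map p).sum

/-- The contracting similitude `S_i(x) = λ^{p_i} x + b_i`. -/
def Smap (lam : ℝ) (p : Fin m → ℕ) (b : Fin m → ℝ) (i : Fin m) : ℝ → ℝ :=
  fun x => lam ^ p i * x + b i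

/-- `S_σ = S_{i₁} ∘ ⋯ ∘ S_{i_k}` for `σ = i₁ ⋯ i_k`. -/
def SW (lam : ℝ) (p : Fin m → ℕ) (b : Fin m → ℝ) (σ : List (Fin m)) : ℝ → ℝ :=
  σ.foldr (fun i f => Smap lam p b i ∘ f) id

/-- `b_σ`, the translation part of `S_σ`. -/
def wordB (lam : ℝ) (p : Fin m → ℕ) (b : Fin m → ℝ) (σ : List (Fin m)) : ℝ :=
  SW lam p b σ 0

/-- `B = {0, b₁, …, b_m}`. -/
def Bset (b : Fin m → ℝ) : Set ℝ := insert 0 (Set.range b)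

/-- `B − B`. -/
def BB (b : Fin m → ℝ) : Set ℝ := {x | ∃ u ∈ Bset b, ∃ v ∈ Bset b, x = u - v}

/-- `max_i |b_i|`. -/
def bmax (b : Fin m → ℝ) : ℝ := ⨆ i, |b i|

/-- The set `𝒞`. -/
def Cset (lam : ℝ) (b : Fin m → ℝ) (T : ℕ) : Set ℝ :=
  {x | |x| ≤ (1 + lam ^ (1 - (T : ℤ))) * bmax b / (1 - lam) ∧
    ∃ R : ℝ[X], (∀ n, R.coeff n ∈ BB b) ∧ lam ^ (2 - (T : ℤ)) * x = R.eval lam⁻¹}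

/-- The vertex set `Ξ = {n ∈ ℤ : |n| ≤ T−1} × 𝒞`. -/
def Xi (lam : ℝ) (b : Fin m → ℝ) (T : ℕ) : Set (ℤ × ℝ) :=
  {v | |v.1| ≤ (T : ℤ) - 1 ∧ v.2 ∈ Cset lam b T}

/-- The open set condition. -/
def OSC (lam : ℝ) (p : Fin m → ℕ) (b : Fin m → ℝ) : Prop :=
  ∃ U : Set ℝ, U.Nonempty ∧ IsOpen U ∧ (⋃ i, Smap lam p b i '' U) ⊆ U ∧
    ∀ i j : Fin m, i ≠ j → Smap lam p b i '' U ∩ Smap lam p b j '' U = ∅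

/-- The strong separation condition for the attractor `E`. -/
def SSC (lam : ℝ) (p : Fin m → ℕ) (b : Fin m → ℝ) (E : Set ℝ) : Prop :=
  ∀ i j : Fin m, i ≠ j → Smap lam p b i '' E ∩ Smap lam p b j '' E = ∅

/-- Group law on `ℤ × ℝ`: `(p₁,c₁)·(p₂,c₂) = (p₁+p₂, λ^{p₁} c₂ + c₁)`. -/
def gmul (lam : ℝ) (u v : ℤ × ℝ) : ℤ × ℝ := (u.1 + v.1, lam ^ u.1 * v.2 + u.2)

/-- Inverse for the group law: `(p,c)⁻¹ = (−p, −λ^{−p} c)`. -/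
def ginv (lam : ℝ) (u : ℤ × ℝ) : ℤ × ℝ := (-u.1, -(lam ^ (-u.1) * u.2))

/-- The group element `(p_σ, b_σ)` associated to a finite word `σ`. -/
def elem (lam : ℝ) (p : Fin m → ℕ) (b : Fin m → ℝ) (σ : List (Fin m)) : ℤ × ℝ :=
  ((wordP p σ : ℤ), wordB lam p b σ)

/-- The sequence `(q_k, c_k)` with the recursive structure w.r.t. `({α_k}, {β_k})`:
`recSeq … k = (q_{k+1}, c_{k+1})`, i.e. index `k` corresponds to `(q_{k+1}, c_{k+1})`. -/
def recSeq (lam : ℝ) (p : Fin m → ℕ) (b : Fin m → ℝ) (α β : ℕ → List (Fin m)) : ℕ → ℤ × ℝ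
  | 0 => gmul lam (ginv lam (elem lam p b (β 0))) (elem lam p b (α 0))
  | (k+1) => gmul lam (ginv lam (elem lam p b (β (k+1))))
      (gmul lam (recSeq lam p b α β k) (elem lam p b (α (k+1))))

/-- The edge relation of the directed graph `G` on `Ξ`. -/
def edge (lam : ℝ) (p : Fin m → ℕ) (b : Fin m → ℝ) (T : ℕ) (u v : ℤ × ℝ) : Prop :=
  u ∈ Xi lam b T ∧ v ∈ Xi lam b T ∧
    ∃ α β : List (Fin m), 1 ≤ wordP p α ∧ wordP p α ≤ 2 * T - 1 ∧
      1 ≤ wordP p β ∧ wordP p β ≤ 2 * T - 1 ∧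
      v.1 = (wordP p α : ℤ) + u.1 - (wordP p β : ℤ) ∧
      v.2 = lam ^ (-(wordP p β : ℤ)) * u.2 + lam ^ (u.1 - (wordP p β : ℤ)) * wordB lam p b α
        - lam ^ (-(wordP p β : ℤ)) * wordB lam p b β

/-- `Λ = Ξ ∩ {(p_j − p_i, λ^{−p_i}(b_j − b_i)) : i ≠ j}`. -/
def Lam (lam : ℝ) (p : Fin m → ℕ) (b : Fin m → ℝ) (T : ℕ) : Set (ℤ × ℝ) :=
  Xi lam b T ∩ {v | ∃ i j : Fin m, i ≠ j ∧
    v = ((p j : ℤ) - (p i : ℤ), lam ^ (-(p i : ℤ)) * (b j - b i))}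

/-- The length-`k` prefix of an infinite word `ω`. -/
def prefixList (ω : ℕ → Fin m) (k : ℕ) : List (Fin m) := (List.range k).map ω

/-!
Write `b_σ = D_σ(λ)` with `D_σ = ∑ b_{i_j} X^{p_{i_1} + ⋯ + p_{i_{j-1}}}`. Since every `p_i` is
positive, the exponents are distinct and less than `p_σ`, so the coefficients of `D_σ` lie in `B`.
Hence `b_σ - b_τ` is the value at `λ` of a polynomial with coefficients in `B - B` and degree less
than `N = p_τ + T - 1`. Reversing its coefficients gives `b_σ - b_τ = λ^{N-1} R(λ⁻¹)`.
-/

/-- The polynomial `D_σ = ∑ b_{i_j} X^{p_{i_1} + ⋯ + p_{i_{j-1}}}` whose value at `λ` is `b_σ`.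
The recursion mirrors `S_{iσ} = S_i ∘ S_σ`. -/
def digitPoly {ι R : Type*} [Semiring R] (p : ι → ℕ) (b : ι → R) : List ι → R[X]
  | [] => 0
  | i :: σ => X ^ p i * digitPoly p b σ + C (b i)

section DigitPoly

variable {ι R : Type*} [Semiring R] {p : ι → ℕ}

theorem coeff_zero_digitPoly_cons (hp : ∀ i, 1 ≤ p i) (b : ι → R) (i : ι) (σ : List ι) :
    (digitPoly p b (i :: σ)).coeff 0 = b i := by
  have hpi : p i ≠ 0 := Nat.one_le_iff_ne_zero.mp (hp i)
  simp [digitPoly, hpi.symm]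

theorem coeff_digitPoly_cons_of_ne_zero (b : ι → R) (i : ι) (σ : List ι) {n : ℕ} (hn : n ≠ 0) :
    (digitPoly p b (i :: σ)).coeff n =
      if p i ≤ n then (digitPoly p b σ).coeff (n - p i) else 0 := by
  simp [digitPoly, coeff_X_pow_mul', coeff_C, hn]

theorem coeff_digitPoly_mem (hp : ∀ i, 1 ≤ p i) (b : ι → R) (σ : List ι) (n : ℕ) :
    (digitPoly p b σ).coeff n ∈ insert 0 (Set.range b) := by
  induction σ generalizing n with
  | nil => simp [digitPoly]
  | cons i σ ih =>
    obtain rfl | hn := eq_or_ne n 0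
    · exact coeff_zero_digitPoly_cons hp b i σ ▸ Or.inr ⟨i, rfl⟩
    · rw [coeff_digitPoly_cons_of_ne_zero b i σ hn]
      split_ifs
      · exact ih (n - p i)
      · exact Or.inl rfl

theorem degree_digitPoly_lt (hp : ∀ i, 1 ≤ p i) (b : ι → R) (σ : List ι) :
    (digitPoly p b σ).degree < ((σ.map p).sum : ℕ) := by
  induction σ with
  | nil => simp [digitPoly]
  | cons i σ ih =>
    rw [degree_lt_iff_coeff_zero] at ih ⊢
    intro n hn
    rw [List.map_cons, List.sum_cons] at hn
    have hpi := hp i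
    rw [coeff_digitPoly_cons_of_ne_zero b i σ (by omega), if_pos (by omega)]
    exact ih (n - p i) (by omega)

end DigitPoly

theorem wordB_eq_eval_digitPoly (lam : ℝ) (p : Fin m → ℕ) (b : Fin m → ℝ) (σ : List (Fin m)) :
    wordB lam p b σ = (digitPoly p b σ).eval lam := by
  induction σ with
  | nil => simp [wordB, SW, digitPoly]
  | cons i σ ih =>
    calc wordB lam p b (i :: σ) = lam ^ p i * wordB lam p b σ + b i := rfl
      _ = (digitPoly p b (i :: σ)).eval lam := by simp [ih, digitPoly]

-- For `N = 0` the truncated `N - 1` is harmless, because then `P = 0`.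
theorem eval_eq_zpow_mul_eval_inv_reflect {K : Type*} [Field K] {x : K} (hx : x ≠ 0) {P : K[X]}
    {N : ℕ} (hP : P.degree < N) :
    P.eval x = x ^ ((N : ℤ) - 1) * (P.reflect (N - 1)).eval x⁻¹ := by
  obtain _ | N := N
  · have hP0 : P = 0 := by simpa using hP
    simp [hP0]
  · have hdeg : P.natDegree ≤ N :=
      natDegree_le_iff_coeff_eq_zero.mpr ((degree_lt_iff_coeff_zero P (N + 1)).mp hP)
    let := invertibleOfNonzero hx
    have hreflect := eval₂_reflect_mul_pow (RingHom.id K) x N P hdeg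
    rw [invOf_eq_inv] at hreflect
    simpa [eval₂_id, mul_comm] using hreflect.symm

theorem stmt0_general {lam : ℝ} (hlam : lam ≠ 0) {p : Fin m → ℕ} (hp : ∀ i, 1 ≤ p i)
    (b : Fin m → ℝ) {T : ℕ} (hT : 1 ≤ T) {σ τ : List (Fin m)}
    (hdiff : (wordP p σ : ℤ) - (wordP p τ : ℤ) ≤ (T : ℤ) - 1) :
    ∃ R : ℝ[X], (∀ n, R.coeff n ∈ BB b) ∧
      lam ^ (-(wordP p τ : ℤ)) * (wordB lam p b σ - wordB lam p b τ)
        = lam ^ ((T : ℤ) - 2) * R.eval lam⁻¹ := by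
  obtain ⟨k, rfl⟩ : ∃ k : ℕ, T = k + 1 := ⟨T - 1, by omega⟩
  have hσ_le : wordP p σ ≤ wordP p τ + k := by omega
  set P := digitPoly p b σ - digitPoly p b τ with hP
  have hcoeff (n : ℕ) : P.coeff n ∈ BB b :=
    ⟨_, coeff_digitPoly_mem hp b σ n, _, coeff_digitPoly_mem hp b τ n, coeff_sub _ _ n⟩
  have hdeg : P.degree < (wordP p τ + k : ℕ) := by
    refine (degree_sub_le _ _).trans_lt (max_lt ?_ ?_)
    · exact (degree_digitPoly_lt hp b σ).trans_le (Nat.cast_le.mpr hσ_le)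
    · exact (degree_digitPoly_lt hp b τ).trans_le (Nat.cast_le.mpr (Nat.le_add_right _ k))
  refine ⟨P.reflect (wordP p τ + k - 1), fun n => ?_, ?_⟩
  · rw [coeff_reflect]
    exact hcoeff _
  · rw [wordB_eq_eval_digitPoly, wordB_eq_eval_digitPoly, ← eval_sub, ← hP,
      eval_eq_zpow_mul_eval_inv_reflect hlam hdeg, ← mul_assoc, ← zpow_add₀ hlam]
    congr 2
    push_cast
    ring

theorem stmt0 (lam : ℝ) (hlam0 : 0 < lam) (hlam1 : lam < 1)
    (hPisot : IsPisot lam⁻¹)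
    {m : ℕ} (hm : 2 ≤ m) (p : Fin m → ℕ) (hp : ∀ i, 1 ≤ p i)
    (b : Fin m → ℝ) (hbZ : ∀ i, ∃ z : ℤ, b i = (z : ℝ))
    (T : ℕ) (hT : T = Finset.univ.sup p)
    (σ τ : List (Fin m)) (hσ : σ ≠ []) (hτ : τ ≠ [])
    (hdiff : |(wordP p σ : ℤ) - (wordP p τ : ℤ)| ≤ (T : ℤ) - 1) :
    ∃ R : ℝ[X], (∀ n, R.coeff n ∈ BB b) ∧
      lam ^ (-(wordP p τ : ℤ)) * (wordB lam p b σ - wordB lam p b τ)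
        = lam ^ ((T : ℤ) - 2) * R.eval lam⁻¹ := by
  have hT_pos : 1 ≤ T := by linarith [(abs_nonneg _).trans hdiff]
  exact stmt0_general hlam0.ne' hp b hT_pos ((le_abs_self _).trans hdiff)

end PVOSC
end
end

section
/- The weak separation property holds for {S_i}: there exists ε > 0 such that for all finite words σ, τ over {1,…,m}, either S_σ = S_τ as maps, or max(|λ^{p_σ−p_τ} − 1|, |λ^{−p_τ}(b_σ − b_τ)|) ≥ ε (i.e., the identity map is not an accumulation point of the maps S_τ⁻¹∘S_σ(x) = λ^{p_σ−p_τ}x + λ^{−p_τ}(b_σ − b_τ) with S_σ ≠ S_τ). -/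
open Polynomial Filter

noncomputable section

namespace PVOSC

variable {m : ℕ}

/-!
If `p_σ ≠ p_τ`, the scaling ratio `λ ^ (p_σ - p_τ)` already differs from `1` by at least `1 - λ`.
If `p_σ = p_τ`, the translation part `λ ^ (-p_τ) * (b_σ - b_τ)` is the value at `θ = λ⁻¹` of an
integer polynomial whose coefficients are bounded independently of `σ` and `τ`. Garsia's lemma keeps
such a value `R(θ)` away from `0` unless it vanishes: the product of all conjugates of `R(θ)` is a
nonzero integer, and each conjugate other than `R(θ)` itself is bounded by a geometric series
because `θ` is a Pisot number.
-/

theorem norm_eval_le_div_one_sub_norm {A : Type*} [SeminormedRing A] [NormOneClass A] {f : A[X]}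
    {M : ℝ} (hf : ∀ n, ‖f.coeff n‖ ≤ M) {w : A} (hw : ‖w‖ < 1) :
    ‖f.eval w‖ ≤ M / (1 - ‖w‖) := by
  have hM : 0 ≤ M := (norm_nonneg _).trans (hf 0)
  have hterm (n : ℕ) : ‖f.coeff n * w ^ n‖ ≤ M * ‖w‖ ^ n :=
    (norm_mul_le _ _).trans (mul_le_mul (hf n) (norm_pow_le w n) (norm_nonneg _) hM)
  have hgeom (N : ℕ) : ∑ n ∈ Finset.range N, ‖w‖ ^ n ≤ 1 / (1 - ‖w‖) := by
    simpa using geom_sum_Ico_le_of_lt_one (m := 0) (n := N) (norm_nonneg w) hw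
  calc ‖f.eval w‖ = ‖∑ n ∈ Finset.range (f.natDegree + 1), f.coeff n * w ^ n‖ := by
        rw [eval_eq_sum_range]
    _ ≤ ∑ n ∈ Finset.range (f.natDegree + 1), M * ‖w‖ ^ n :=
        norm_sum_le_of_le _ fun n _ => hterm n
    _ = M * ∑ n ∈ Finset.range (f.natDegree + 1), ‖w‖ ^ n := (Finset.mul_sum ..).symm
    _ ≤ M * (1 / (1 - ‖w‖)) := mul_le_mul_of_nonneg_left (hgeom _) hM
    _ = M / (1 - ‖w‖) := mul_one_div _ _

theorem norm_aeval_le_div_one_sub_norm {R : ℤ[X]} {M : ℤ} (hR : ∀ n, |R.coeff n| ≤ M) {w : ℂ}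
    (hw : ‖w‖ < 1) : ‖aeval w R‖ ≤ M / (1 - ‖w‖) := by
  rw [← eval_map_algebraMap]
  refine norm_eval_le_div_one_sub_norm (fun n => ?_) hw
  rw [coeff_map, eq_intCast, Complex.norm_intCast]
  exact_mod_cast hR n

theorem one_sub_le_abs_zpow_sub_one {𝕜 : Type*} [Field 𝕜] [LinearOrder 𝕜] [IsStrictOrderedRing 𝕜]
    {x : 𝕜} (hx0 : 0 < x) (hx1 : x ≤ 1) {n : ℤ} (hn : n ≠ 0) : 1 - x ≤ |x ^ n - 1| := by
  rcases lt_or_gt_of_ne hn with hneg | hpos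
  · have hinv : x⁻¹ ≤ x ^ n := by
      simpa using zpow_le_zpow_right_of_le_one₀ hx0 hx1 (show n ≤ -1 by lia)
    have htwo : 2 - x ≤ x⁻¹ := by
      rw [← one_div, le_div_iff₀ hx0]
      linarith [sq_nonneg (1 - x)]
    linarith [le_abs_self (x ^ n - 1)]
  · have hle : x ^ n ≤ x := by
      simpa using zpow_le_zpow_right_of_le_one₀ hx0 hx1 (show 1 ≤ n by lia)
    linarith [neg_le_abs (x ^ n - 1)]

section Garsia

variable {K : Type*} [Field K] [Algebra ℚ K] [FiniteDimensional ℚ K]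

theorem one_le_prod_norm_embeddings {x : K} (hx : IsIntegral ℤ x) (hx0 : x ≠ 0) :
    1 ≤ ∏ φ : K →ₐ[ℚ] ℂ, ‖φ x‖ := by
  obtain ⟨n, hn⟩ := IsIntegrallyClosed.isIntegral_iff.mp (Algebra.isIntegral_norm ℚ hx)
  have hn0 : n ≠ 0 := by
    rintro rfl
    exact Algebra.norm_ne_zero_iff.mpr hx0 (by rw [← hn, map_zero])
  calc (1 : ℝ) ≤ |(n : ℝ)| := by exact_mod_cast Int.one_le_abs hn0
    _ = ‖algebraMap ℚ ℂ (Algebra.norm ℚ x)‖ := by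
        rw [← hn, eq_intCast, map_intCast, Complex.norm_intCast]
    _ = ∏ φ : K →ₐ[ℚ] ℂ, ‖φ x‖ := by rw [Algebra.norm_eq_prod_embeddings, norm_prod]

theorem exists_pos_le_norm_embedding_aeval {α : K} (hα : IsIntegral ℤ α) {ι : K →ₐ[ℚ] ℂ}
    (hconj : ∀ φ : K →ₐ[ℚ] ℂ, φ ≠ ι → ‖φ α‖ < 1) {M : ℤ} (hM : 0 < M) :
    ∃ ε : ℝ, 0 < ε ∧ ∀ R : ℤ[X], (∀ n, |R.coeff n| ≤ M) → aeval α R ≠ 0 →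
      ε ≤ ‖ι (aeval α R)‖ := by
  classical
  set P : ℝ := ∏ φ ∈ Finset.univ.erase ι, M / (1 - ‖φ α‖)
  have hP : 0 < P := Finset.prod_pos fun φ hφ =>
    div_pos (by exact_mod_cast hM) (sub_pos.mpr (hconj φ (Finset.ne_of_mem_erase hφ)))
  refine ⟨P⁻¹, inv_pos.mpr hP, fun R hR hR0 => ?_⟩
  have hint : IsIntegral ℤ (aeval α R) :=
    adjoin_le_integralClosure hα (aeval_mem_adjoin_singleton ℤ α)
  have hothers : ∏ φ ∈ Finset.univ.erase ι, ‖φ (aeval α R)‖ ≤ P := by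
    refine Finset.prod_le_prod (fun _ _ => norm_nonneg _) fun φ hφ => ?_
    have hcomm : φ (aeval α R) = aeval (φ α) R :=
      (aeval_algHom_apply (φ.restrictScalars ℤ) α R).symm
    rw [hcomm]
    exact norm_aeval_le_div_one_sub_norm hR (hconj φ (Finset.ne_of_mem_erase hφ))
  rw [inv_le_iff_one_le_mul₀ hP]
  calc 1 ≤ ∏ φ : K →ₐ[ℚ] ℂ, ‖φ (aeval α R)‖ := one_le_prod_norm_embeddings hint hR0
    _ = ‖ι (aeval α R)‖ * ∏ φ ∈ Finset.univ.erase ι, ‖φ (aeval α R)‖ :=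
        (Finset.mul_prod_erase _ _ (Finset.mem_univ ι)).symm
    _ ≤ ‖ι (aeval α R)‖ * P := mul_le_mul_of_nonneg_left hothers (norm_nonneg _)

end Garsia

open IntermediateField in
theorem IsPisot.norm_embedding_gen_lt_one {θ : ℝ} (hθ : IsPisot θ) {φ : ℚ⟮θ⟯ →ₐ[ℚ] ℂ}
    (hφ : φ ≠ IsScalarTower.toAlgHom ℚ ℚ⟮θ⟯ ℂ) : ‖φ (AdjoinSimple.gen ℚ θ)‖ < 1 := by
  refine hθ.2.2 _ ?_ fun hgen => hφ (adjoin_algHom_ext ℚ ?_)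
  · have hroot : aeval (AdjoinSimple.gen ℚ θ) (minpoly ℤ θ) = 0 := by
      refine (algebraMap ℚ⟮θ⟯ ℝ).injective ?_
      rw [← aeval_algebraMap_apply, AdjoinSimple.algebraMap_gen, minpoly.aeval, map_zero]
    have hcomm := aeval_algHom_apply (φ.restrictScalars ℤ) (AdjoinSimple.gen ℚ θ) (minpoly ℤ θ)
    rw [hroot, map_zero] at hcomm
    exact hcomm
  · rintro x rfl
    exact hgen

open IntermediateField in
theorem IsPisot.exists_pos_le_abs_aeval {θ : ℝ} (hθ : IsPisot θ) {M : ℤ} (hM : 0 < M) :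
    ∃ ε : ℝ, 0 < ε ∧ ∀ R : ℤ[X], (∀ n, |R.coeff n| ≤ M) → aeval θ R ≠ 0 → ε ≤ |aeval θ R| := by
  have hgen : algebraMap ℚ⟮θ⟯ ℝ (AdjoinSimple.gen ℚ θ) = θ := AdjoinSimple.algebraMap_gen ℚ θ
  have hint : IsIntegral ℤ (AdjoinSimple.gen ℚ θ) :=
    (isIntegral_algebraMap_iff (algebraMap ℚ⟮θ⟯ ℝ).injective).mp (hgen.symm ▸ hθ.2.1)
  have : FiniteDimensional ℚ ℚ⟮θ⟯ := adjoin.finiteDimensional hθ.2.1.tower_top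
  obtain ⟨ε, hε, hgap⟩ :=
    exists_pos_le_norm_embedding_aeval hint (fun _ => hθ.norm_embedding_gen_lt_one) hM
  refine ⟨ε, hε, fun R hR hR0 => ?_⟩
  have hval : aeval θ R = algebraMap ℚ⟮θ⟯ ℝ (aeval (AdjoinSimple.gen ℚ θ) R) := by
    rw [← aeval_algebraMap_apply, hgen]
  rw [hval] at hR0 ⊢
  calc ε ≤ ‖((algebraMap ℚ⟮θ⟯ ℝ (aeval (AdjoinSimple.gen ℚ θ) R) : ℝ) : ℂ)‖ :=
        hgap R hR (ne_zero_of_map hR0)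
    _ = |algebraMap ℚ⟮θ⟯ ℝ (aeval (AdjoinSimple.gen ℚ θ) R)| := Complex.norm_real _

theorem wordP_cons (p : Fin m → ℕ) (i : Fin m) (σ : List (Fin m)) :
    wordP p (i :: σ) = p i + wordP p σ := by
  simp [wordP]

theorem wordB_cons (lam : ℝ) (p : Fin m → ℕ) (b : Fin m → ℝ) (i : Fin m) (σ : List (Fin m)) :
    wordB lam p b (i :: σ) = lam ^ p i * wordB lam p b σ + b i :=
  rfl

theorem SW_apply (lam : ℝ) (p : Fin m → ℕ) (b : Fin m → ℝ) (σ : List (Fin m)) (x : ℝ) :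
    SW lam p b σ x = lam ^ wordP p σ * x + wordB lam p b σ := by
  induction σ with
  | nil => simp [SW, wordP, wordB]
  | cons i σ ih =>
    calc SW lam p b (i :: σ) x = lam ^ p i * SW lam p b σ x + b i := rfl
      _ = lam ^ wordP p (i :: σ) * x + wordB lam p b (i :: σ) := by
        rw [ih, wordP_cons, wordB_cons]
        ring

/-- The integer polynomial whose value at `λ⁻¹` is `λ ^ (-p_σ) * b_σ` when the translations are the
integers `z i`. A letter `i` of `σ` contributes `z i` in degree `p_ρ`, where `ρ` is the suffix of
`σ` starting at that letter. -/
def wordPoly (p : Fin m → ℕ) (z : Fin m → ℤ) : List (Fin m) → ℤ[X]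
  | [] => 0
  | i :: σ => wordPoly p z σ + monomial (wordP p (i :: σ)) (z i)

theorem aeval_wordPoly {lam : ℝ} (hlam : lam ≠ 0) (p : Fin m → ℕ) (z : Fin m → ℤ)
    (σ : List (Fin m)) :
    aeval lam⁻¹ (wordPoly p z σ) = lam⁻¹ ^ wordP p σ * wordB lam p (fun i => z i) σ := by
  induction σ with
  | nil => simp [wordPoly, wordB, SW]
  | cons i σ ih =>
    have hcancel : lam⁻¹ ^ p i * lam ^ p i = 1 := by
      rw [← mul_pow, inv_mul_cancel₀ hlam, one_pow]
    rw [wordPoly, map_add, ih, aeval_monomial, eq_intCast, wordB_cons, wordP_cons, pow_add]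
    linear_combination (-(lam⁻¹ ^ wordP p σ * wordB lam p (fun i => z i) σ)) * hcancel

theorem natDegree_wordPoly_le (p : Fin m → ℕ) (z : Fin m → ℤ) (σ : List (Fin m)) :
    (wordPoly p z σ).natDegree ≤ wordP p σ := by
  induction σ with
  | nil => simp [wordPoly]
  | cons i σ ih =>
    refine natDegree_add_le_of_degree_le (ih.trans ?_) (natDegree_monomial_le _)
    rw [wordP_cons]
    exact Nat.le_add_left _ _

theorem abs_coeff_wordPoly_le {p : Fin m → ℕ} (hp : ∀ i, 1 ≤ p i) (z : Fin m → ℤ)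
    (σ : List (Fin m)) (n : ℕ) : |(wordPoly p z σ).coeff n| ≤ ∑ i, |z i| := by
  induction σ with
  | nil => simpa [wordPoly] using Finset.sum_nonneg fun i _ => abs_nonneg (z i)
  | cons i σ ih =>
    rw [wordPoly, coeff_add, coeff_monomial]
    split_ifs with hn
    · have hdeg : (wordPoly p z σ).natDegree < n := by
        have := natDegree_wordPoly_le p z σ
        have := hp i
        rw [wordP_cons] at hn
        lia
      rw [coeff_eq_zero_of_natDegree_lt hdeg, zero_add]
      exact Finset.single_le_sum (f := fun j => |z j|) (fun _ _ => abs_nonneg _)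
        (Finset.mem_univ i)
    · rwa [add_zero]

theorem exists_pos_le_abs_wordB_sub {lam : ℝ} (hlam : IsPisot lam⁻¹) {p : Fin m → ℕ}
    (hp : ∀ i, 1 ≤ p i) (z : Fin m → ℤ) :
    ∃ ε : ℝ, 0 < ε ∧ ∀ σ τ : List (Fin m), wordP p σ = wordP p τ →
      wordB lam p (fun i => z i) σ ≠ wordB lam p (fun i => z i) τ →
      ε ≤ |lam ^ (-(wordP p τ : ℤ)) *
        (wordB lam p (fun i => z i) σ - wordB lam p (fun i => z i) τ)| := by
  have hlam0 : lam ≠ 0 := (inv_pos.mp (zero_lt_one.trans hlam.1)).ne'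
  have hB : 0 ≤ ∑ i, |z i| := Finset.sum_nonneg fun i _ => abs_nonneg (z i)
  obtain ⟨ε, hε, hgap⟩ := hlam.exists_pos_le_abs_aeval (M := 2 * ∑ i, |z i| + 1) (by lia)
  refine ⟨ε, hε, fun σ τ hP hne => ?_⟩
  have hval : lam ^ (-(wordP p τ : ℤ)) *
      (wordB lam p (fun i => z i) σ - wordB lam p (fun i => z i) τ) =
        aeval lam⁻¹ (wordPoly p z σ - wordPoly p z τ) := by
    rw [map_sub, aeval_wordPoly hlam0, aeval_wordPoly hlam0, hP, ← mul_sub, zpow_neg,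
      zpow_natCast, inv_pow]
  have hcoeff (n : ℕ) : |(wordPoly p z σ - wordPoly p z τ).coeff n| ≤ 2 * ∑ i, |z i| + 1 := by
    rw [coeff_sub]
    linarith [abs_sub ((wordPoly p z σ).coeff n) ((wordPoly p z τ).coeff n),
      abs_coeff_wordPoly_le hp z σ n, abs_coeff_wordPoly_le hp z τ n]
  rw [hval]
  refine hgap _ hcoeff ?_
  rw [← hval]
  exact mul_ne_zero (zpow_ne_zero _ hlam0) (sub_ne_zero.mpr hne)

theorem stmt1 (lam : ℝ) (hlam0 : 0 < lam) (hlam1 : lam < 1)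
    (hPisot : IsPisot lam⁻¹)
    {m : ℕ} (hm : 2 ≤ m) (p : Fin m → ℕ) (hp : ∀ i, 1 ≤ p i)
    (b : Fin m → ℝ) (hbZ : ∀ i, ∃ z : ℤ, b i = (z : ℝ)) :
    ∃ ε : ℝ, 0 < ε ∧ ∀ σ τ : List (Fin m), σ ≠ [] → τ ≠ [] →
      SW lam p b σ = SW lam p b τ ∨
        ε ≤ max |lam ^ ((wordP p σ : ℤ) - (wordP p τ : ℤ)) - 1|
              |lam ^ (-(wordP p τ : ℤ)) * (wordB lam p b σ - wordB lam p b τ)| := by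
  choose z hz using hbZ
  obtain rfl : b = fun i => (z i : ℝ) := funext hz
  obtain ⟨ε, hε, hgap⟩ := exists_pos_le_abs_wordB_sub hPisot hp z
  refine ⟨min ε (1 - lam), lt_min hε (sub_pos.mpr hlam1), fun σ τ _ _ => ?_⟩
  by_cases hP : wordP p σ = wordP p τ
  · by_cases hB : wordB lam p (fun i => z i) σ = wordB lam p (fun i => z i) τ
    · exact Or.inl (funext fun x => by rw [SW_apply, SW_apply, hP, hB])
    · exact Or.inr (min_le_of_left_le (le_max_of_le_right (hgap σ τ hP hB)))
  · have hratio : 1 - lam ≤ |lam ^ ((wordP p σ : ℤ) - (wordP p τ : ℤ)) - 1| :=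
      one_sub_le_abs_zpow_sub_one hlam0 hlam1.le (sub_ne_zero.mpr (by exact_mod_cast hP))
    exact Or.inr (min_le_of_right_le (le_max_of_le_left hratio))

end PVOSC
end
end
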